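/- For every k-subspace U ⊆ V, the endomorphism p_U := t⁻¹π_{U*} + π_U of V[t,t⁻¹] belongs to PPU(b)⁻, and its kernel on V⊕ is Ω(p_U) = {tv + V[t⁻¹] : v ∈ U*}, the image in V⊕ of tU*. -/

import Mathlib

/-!
The endomorphisms `tⁿ(1 - π) + π`, for `π` an idempotent and `n` an integer, form a one-parameter
group in `n`; this gives the invertibility of `p_U`, the case `n = -1`. If `π` is self-adjoint, then
the adjoint of `tⁿ(1 - π) + π` with respect to `b̃` is `t⁻ⁿ(1 - π) + π`, which is also its inverse,
so `b̃` is preserved. For the kernel, the `i`-th coefficient of `p_U v` is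
`(1 - π) v_{i+1} + π v_i`, whose summands lie in complementary subspaces; hence it vanishes for all
`i > 0` if and only if `v_i = 0` for `i > 1` and `π v₁ = 0`.
-/

open Finsupp

variable (k : Type*) [Field k] (V : Type*) [AddCommGroup V] [Module k V]

/-- Multiplication by `t^n` on `V[t,t⁻¹] := ℤ →₀ V` (writing `v = ∑ᵢ tⁱ vᵢ` as the
finitely supported function `i ↦ vᵢ`). -/
noncomputable def shift (n : ℤ) : (ℤ →₀ V) ≃ₗ[k] (ℤ →₀ V) :=
  Finsupp.domLCongr (Equiv.addRight n)

/-- The coefficient of `tⁿ` of `b̃(v,w) = ∑ₙ tⁿ (∑ᵢ b(v_{i-n}, w_i))`. -/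
noncomputable def Btilde (b : LinearMap.BilinForm k V) (n : ℤ) (v w : ℤ →₀ V) : k :=
  w.sum fun i wi => b (v (i - n)) wi

/-- `φ` is a paraunitary transformation: an invertible `k[t,t⁻¹]`-linear
(i.e. `k`-linear and commuting with multiplication by `t`) endomorphism of
`V[t,t⁻¹]` preserving `b̃`. -/
def IsPU (b : LinearMap.BilinForm k V) (φ : (ℤ →₀ V) ≃ₗ[k] (ℤ →₀ V)) : Prop :=
  (∀ v, φ (shift k V 1 v) = shift k V 1 (φ v)) ∧
  ∀ (n : ℤ) (v w : ℤ →₀ V), Btilde k V b n (φ v) (φ w) = Btilde k V b n v w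

/-- The specialization `t = 1` of a `k[t,t⁻¹]`-linear endomorphism `f = ∑ᵢ tⁱ fᵢ`
of `V[t,t⁻¹]`, i.e. the endomorphism `ε₁(f) = ∑ᵢ fᵢ` of `V`. -/
noncomputable def eps (f : (ℤ →₀ V) →ₗ[k] (ℤ →₀ V)) : V →ₗ[k] V :=
  (Finsupp.lsum k fun _ : ℤ => (LinearMap.id : V →ₗ[k] V)) ∘ₗ f ∘ₗ Finsupp.lsingle 0

/-- `φ` is pure paraunitary: paraunitary and specializing to the identity at `t = 1`. -/
def IsPPU (b : LinearMap.BilinForm k V) (φ : (ℤ →₀ V) ≃ₗ[k] (ℤ →₀ V)) : Prop :=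
  IsPU k V b φ ∧ eps k V (φ : (ℤ →₀ V) →ₗ[k] (ℤ →₀ V)) = LinearMap.id

/-- `φ ∈ PPU(b)⁻`: pure paraunitary and all Laurent coefficients `φᵢ` for `i > 0` vanish. -/
def PPUneg (b : LinearMap.BilinForm k V) (φ : (ℤ →₀ V) ≃ₗ[k] (ℤ →₀ V)) : Prop :=
  IsPPU k V b φ ∧ ∀ (x : V) (i : ℤ), 0 < i → φ (Finsupp.single 0 x) i = 0

/-- `V[t⁻¹] ⊆ V[t,t⁻¹]`: the elements with `vᵢ = 0` for `i > 0`. -/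
def Vneg : Submodule k (ℤ →₀ V) where
  carrier := {v | ∀ i : ℤ, 0 < i → v i = 0}
  add_mem' := by
    intro a c ha hc i hi
    simp only [Set.mem_setOf_eq] at *
    simp [Finsupp.add_apply, ha i hi, hc i hi]
  zero_mem' := by intro i _; rfl
  smul_mem' := by
    intro c x hx i hi
    simp only [Set.mem_setOf_eq] at *
    simp [Finsupp.smul_apply, hx i hi]

/-- The orthogonal complement `U* = {v ∈ V | b(u,v) = 0 for all u ∈ U}`. -/
def orthoC (b : LinearMap.BilinForm k V) (U : Submodule k V) : Submodule k V where
  carrier := {v | ∀ u ∈ U, b u v = 0}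
  add_mem' := by
    intro a c ha hc u hu
    simp only [Set.mem_setOf_eq] at *
    rw [map_add, ha u hu, hc u hu, add_zero]
  zero_mem' := by intro u _; simp
  smul_mem' := by
    intro c x hx u hu
    simp only [Set.mem_setOf_eq] at *
    rw [map_smul, hx u hu, smul_zero]

/-- The endomorphism `p_U = t⁻¹ π_{U*} + π_U` of `V[t,t⁻¹]`, where `π` is the
projection of `V` onto `U` along `U*` (so that `π_{U*} = 1 - π`). -/
noncomputable def pULin (π : V →ₗ[k] V) : (ℤ →₀ V) →ₗ[k] (ℤ →₀ V) :=
  (shift k V (-1)).toLinearMap ∘ₗ Finsupp.mapRange.linearMap (LinearMap.id - π) +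
    Finsupp.mapRange.linearMap π

section Projection

variable {R : Type*} [Ring R] {M : Type*} [AddCommGroup M] [Module R M]
  {U W : Submodule R M} {π : M →ₗ[R] M}

theorem ker_eq_of_mem_of_sub_mem (hUW : Disjoint U W) (hπ : ∀ v, π v ∈ U ∧ v - π v ∈ W) :
    LinearMap.ker π = W := by
  ext x
  refine ⟨fun hx => ?_, fun hx => ?_⟩
  · simpa [LinearMap.mem_ker.1 hx] using (hπ x).2
  · have hπx : π x ∈ W := by simpa using W.sub_mem hx (hπ x).2
    exact Submodule.disjoint_def.1 hUW _ (hπ x).1 hπx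

theorem isIdempotentElem_of_mem_of_sub_mem (hUW : Disjoint U W)
    (hπ : ∀ v, π v ∈ U ∧ v - π v ∈ W) : IsIdempotentElem π := by
  ext x
  have hx : x - π x ∈ LinearMap.ker π := ker_eq_of_mem_of_sub_mem hUW hπ ▸ (hπ x).2
  rw [LinearMap.mem_ker, map_sub, sub_eq_zero] at hx
  exact hx.symm

end Projection

section LaurentProj

variable {k : Type*} [Field k] {V : Type*} [AddCommGroup V] [Module k V]
  {b : LinearMap.BilinForm k V}

theorem isSelfAdjoint_of_mem_of_sub_mem_orthoC {U : Submodule k V} {π : V →ₗ[k] V}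
    (hb : b.IsRefl) (hπ : ∀ v, π v ∈ U ∧ v - π v ∈ orthoC k V b U) : b.IsSelfAdjoint π := by
  intro x y
  have left : b (π x) (y - π y) = 0 := (hπ y).2 _ (hπ x).1
  have right : b (x - π x) (π y) = 0 := hb _ _ ((hπ x).2 _ (hπ y).1)
  calc b (π x) y
    _ = b (π x) (π y) := by rwa [map_sub, sub_eq_zero] at left
    _ = b x (π y) := by rw [map_sub, LinearMap.sub_apply, sub_eq_zero] at right; exact right.symm

theorem shift_apply (n : ℤ) (v : ℤ →₀ V) (i : ℤ) : shift k V n v i = v (i - n) := by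
  simp [shift, domLCongr_apply, sub_eq_add_neg]

theorem shift_single (n i : ℤ) (x : V) : shift k V n (single i x) = single (i + n) x := by
  simp [shift]

theorem btilde_add_left (n : ℤ) (v v' w : ℤ →₀ V) :
    Btilde k V b n (v + v') w = Btilde k V b n v w + Btilde k V b n v' w := by
  simp only [Btilde, Finsupp.add_apply, map_add, LinearMap.add_apply, sum_add]

theorem btilde_add_right (n : ℤ) (v w w' : ℤ →₀ V) :
    Btilde k V b n v (w + w') = Btilde k V b n v w + Btilde k V b n v w' :=
  sum_add_index' (fun _ => map_zero _) fun _ => map_add _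

theorem btilde_shift_left (n m : ℤ) (v w : ℤ →₀ V) :
    Btilde k V b n (shift k V m v) w = Btilde k V b n v (shift k V (-m) w) := by
  simp [Btilde, shift, domLCongr_apply, sum_equivMapDomain, sub_eq_add_neg, add_right_comm]

theorem btilde_mapRange_left {f g : V →ₗ[k] V} (hfg : LinearMap.IsAdjointPair b b f g) (n : ℤ)
    (v w : ℤ →₀ V) :
    Btilde k V b n (mapRange.linearMap f v) w = Btilde k V b n v (mapRange.linearMap g w) := by
  simp [Btilde, sum_mapRange_index, hfg _ _]

/-- The endomorphism `tⁿ(1 - π) + π` of `V[t,t⁻¹]`. The map `p_U` is its case `n = -1` for `π` the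
projection onto `U` along `U*`, and for idempotent `π` the inverse of `p_U` is its case `n = 1`. -/
noncomputable def laurentProj (n : ℤ) (π : V →ₗ[k] V) : (ℤ →₀ V) →ₗ[k] (ℤ →₀ V) :=
  (shift k V n).toLinearMap ∘ₗ mapRange.linearMap (LinearMap.id - π) + mapRange.linearMap π

theorem pULin_eq_laurentProj (π : V →ₗ[k] V) : pULin k V π = laurentProj (-1) π :=
  rfl

variable {π : V →ₗ[k] V}

theorem laurentProj_apply (n : ℤ) (v : ℤ →₀ V) (i : ℤ) :
    laurentProj n π v i = v (i - n) - π (v (i - n)) + π (v i) := by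
  simp [laurentProj, shift_apply]

theorem laurentProj_single (n i : ℤ) (x : V) :
    laurentProj n π (single i x) = single (i + n) (x - π x) + single i (π x) := by
  simp [laurentProj, shift_single]

theorem laurentProj_shift (n m : ℤ) (v : ℤ →₀ V) :
    laurentProj n π (shift k V m v) = shift k V m (laurentProj n π v) := by
  ext i
  simp only [laurentProj_apply, shift_apply, sub_right_comm i n m]

theorem eps_laurentProj (n : ℤ) : eps k V (laurentProj n π) = LinearMap.id := by
  ext x
  simp only [eps, LinearMap.comp_apply, lsingle_apply, laurentProj_single, map_add, lsum_single,
    LinearMap.id_apply, sub_add_cancel]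

theorem btilde_laurentProj_left (hπ : b.IsSelfAdjoint π) (n m : ℤ) (v w : ℤ →₀ V) :
    Btilde k V b n (laurentProj m π v) w = Btilde k V b n v (laurentProj (-m) π w) := by
  have hπ' : b.IsSelfAdjoint (LinearMap.id - π : V →ₗ[k] V) := LinearMap.isAdjointPair_id.sub hπ
  have shift_mapRange : shift k V (-m) (mapRange.linearMap (LinearMap.id - π) w) =
      mapRange.linearMap (LinearMap.id - π) (shift k V (-m) w) := by
    ext i
    simp [shift_apply]
  simp only [laurentProj, LinearMap.add_apply, LinearMap.comp_apply, LinearEquiv.coe_coe,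
    btilde_add_left, btilde_add_right, btilde_shift_left, btilde_mapRange_left hπ,
    btilde_mapRange_left hπ', shift_mapRange]

theorem laurentProj_zero : laurentProj 0 π = LinearMap.id := by
  ext i x : 2
  simp only [LinearMap.comp_apply, lsingle_apply, laurentProj_single, add_zero, ← single_add,
    sub_add_cancel, LinearMap.id_apply]

theorem laurentProj_comp_laurentProj (hπ : IsIdempotentElem π) (m n : ℤ) :
    laurentProj m π ∘ₗ laurentProj n π = laurentProj (m + n) π := by
  have hππ (x : V) : π (π x) = π x := LinearMap.congr_fun hπ x
  ext x : 2
  simp [laurentProj_single, hππ, add_comm m n, add_assoc]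

/-- The automorphism `tⁿ(1 - π) + π` of `V[t,t⁻¹]` for an idempotent `π`, with inverse
`t⁻ⁿ(1 - π) + π`. -/
noncomputable def laurentProjEquiv (n : ℤ) (hπ : IsIdempotentElem π) : (ℤ →₀ V) ≃ₗ[k] (ℤ →₀ V) :=
  .ofLinearMap (laurentProj n π) (laurentProj (-n) π)
    (by rw [laurentProj_comp_laurentProj hπ, add_neg_cancel, laurentProj_zero])
    (by rw [laurentProj_comp_laurentProj hπ, neg_add_cancel, laurentProj_zero])

theorem isPU_laurentProjEquiv (n : ℤ) (hπ : IsIdempotentElem π) (hb : b.IsSelfAdjoint π) :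
    IsPU k V b (laurentProjEquiv n hπ) := by
  refine ⟨laurentProj_shift n 1, fun m v w => ?_⟩
  calc Btilde k V b m (laurentProj n π v) (laurentProjEquiv n hπ w)
    _ = Btilde k V b m v ((laurentProjEquiv n hπ).symm (laurentProjEquiv n hπ w)) :=
      btilde_laurentProj_left hb m n v _
    _ = Btilde k V b m v w := by rw [LinearEquiv.symm_apply_apply]

theorem isPPU_laurentProjEquiv (n : ℤ) (hπ : IsIdempotentElem π) (hb : b.IsSelfAdjoint π) :
    IsPPU k V b (laurentProjEquiv n hπ) :=
  ⟨isPU_laurentProjEquiv n hπ hb, eps_laurentProj n⟩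

theorem ppuneg_laurentProjEquiv {n : ℤ} (hn : n ≤ 0) (hπ : IsIdempotentElem π)
    (hb : b.IsSelfAdjoint π) : PPUneg k V b (laurentProjEquiv n hπ) := by
  refine ⟨isPPU_laurentProjEquiv n hπ hb, fun x i hi => ?_⟩
  change laurentProj n π (single 0 x) i = 0
  rw [laurentProj_single, Finsupp.add_apply, single_eq_of_ne (by lia), single_eq_of_ne (by lia),
    add_zero]

theorem laurentProj_apply_eq_zero_iff (hπ : IsIdempotentElem π) {n : ℤ} {v : ℤ →₀ V} {i : ℤ} :
    laurentProj n π v i = 0 ↔ π (v (i - n)) = v (i - n) ∧ π (v i) = 0 := by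
  have hππ (x : V) : π (π x) = π x := LinearMap.congr_fun hπ x
  rw [laurentProj_apply]
  refine ⟨fun h => ?_, fun ⟨hn, hi⟩ => by rw [hn, hi, sub_self, add_zero]⟩
  have hi : π (v i) = 0 := by simpa [hππ] using congrArg π h
  rw [hi, add_zero, sub_eq_zero] at h
  exact ⟨h.symm, hi⟩

theorem mem_map_lsingle_one_sup_vneg {W : Submodule k V} {v : ℤ →₀ V} :
    v ∈ W.map (lsingle 1) ⊔ Vneg k V ↔ v 1 ∈ W ∧ ∀ i, 1 < i → v i = 0 := by
  rw [Submodule.mem_sup]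
  constructor
  · rintro ⟨_, ⟨x, hx, rfl⟩, w, hw, rfl⟩
    have hw (i : ℤ) (hi : 0 < i) : w i = 0 := hw i hi
    refine ⟨by simpa [hw 1 one_pos] using hx, fun i hi => ?_⟩
    simp [hw i (by lia), hi.ne']
  · rintro ⟨hv₁, hv⟩
    refine ⟨single 1 (v 1), ⟨v 1, hv₁, rfl⟩, v - single 1 (v 1), fun i hi => ?_, by simp⟩
    obtain rfl | hi : i = 1 ∨ 1 < i := by lia
    · simp
    · simp [hv i hi, hi.ne']

theorem pULin_mem_vneg_iff (hπ : IsIdempotentElem π) {v : ℤ →₀ V} :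
    pULin k V π v ∈ Vneg k V ↔ v ∈ (LinearMap.ker π).map (lsingle 1) ⊔ Vneg k V := by
  have coeff_eq_zero_iff (i : ℤ) :
      pULin k V π v i = 0 ↔ π (v (i + 1)) = v (i + 1) ∧ π (v i) = 0 := by
    rw [pULin_eq_laurentProj, laurentProj_apply_eq_zero_iff hπ, sub_neg_eq_add]
  rw [mem_map_lsingle_one_sup_vneg, LinearMap.mem_ker]
  change (∀ i, 0 < i → pULin k V π v i = 0) ↔ _
  simp only [coeff_eq_zero_iff]
  refine ⟨fun h => ⟨(h 1 one_pos).2, fun i hi => ?_⟩, fun ⟨hv₁, hv⟩ i hi => ⟨?_, ?_⟩⟩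
  · have fixed : π (v i) = v i := by simpa using (h (i - 1) (by lia)).1
    rw [← fixed, (h i (by lia)).2]
  · rw [hv (i + 1) (by lia), map_zero]
  · obtain rfl | hi : i = 1 ∨ 1 < i := by lia
    · exact hv₁
    · rw [hv i hi, map_zero]

end LaurentProj

theorem stmt11_general (b : LinearMap.BilinForm k V) (hb : b.IsRefl) (U : Submodule k V)
    (hU : Disjoint U (orthoC k V b U)) (π : V →ₗ[k] V)
    (hπ : ∀ v : V, π v ∈ U ∧ v - π v ∈ orthoC k V b U) :
    ∃ p : (ℤ →₀ V) ≃ₗ[k] (ℤ →₀ V),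
      (p : (ℤ →₀ V) →ₗ[k] (ℤ →₀ V)) = pULin k V π ∧
      PPUneg k V b p ∧
      ∀ v : ℤ →₀ V, (pULin k V π v ∈ Vneg k V ↔
        v ∈ Submodule.map (Finsupp.lsingle (1 : ℤ) : V →ₗ[k] (ℤ →₀ V)) (orthoC k V b U) ⊔
              Vneg k V) := by
  have idem : IsIdempotentElem π := isIdempotentElem_of_mem_of_sub_mem hU hπ
  have selfAdjoint : b.IsSelfAdjoint π := isSelfAdjoint_of_mem_of_sub_mem_orthoC hb hπ
  refine ⟨laurentProjEquiv (-1) idem, (pULin_eq_laurentProj π).symm,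
    ppuneg_laurentProjEquiv (by norm_num) idem selfAdjoint, fun v => ?_⟩
  rw [pULin_mem_vneg_iff idem, ker_eq_of_mem_of_sub_mem hU hπ]

/-- For every subspace `U ⊆ V`, with `π` the projection onto `U`
along `U*`, the map `p_U = t⁻¹π_{U*} + π_U` is (invertible and) in `PPU(b)⁻`, and its
kernel on `V⊕` is the image of `tU*`, i.e. the preimage in `V[t,t⁻¹]` of its kernel on
`V⊕` equals `tU* + V[t⁻¹]`. -/
theorem stmt11 [FiniteDimensional k V] (b : LinearMap.BilinForm k V)
    (hsymm : ∀ v w : V, b v w = b w v)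
    (haniso : ∀ v : V, b v v = 0 → v = 0)
    (U : Submodule k V) (π : V →ₗ[k] V)
    (hπ : ∀ v : V, π v ∈ U ∧ v - π v ∈ orthoC k V b U) :
    ∃ p : (ℤ →₀ V) ≃ₗ[k] (ℤ →₀ V),
      (p : (ℤ →₀ V) →ₗ[k] (ℤ →₀ V)) = pULin k V π ∧
      PPUneg k V b p ∧
      ∀ v : ℤ →₀ V, (pULin k V π v ∈ Vneg k V ↔
        v ∈ Submodule.map (Finsupp.lsingle (1 : ℤ) : V →ₗ[k] (ℤ →₀ V)) (orthoC k V b U) ⊔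
              Vneg k V) := by
  exact stmt11_general k V b (fun v w h => hsymm w v ▸ h) U
    (Submodule.disjoint_def.2 fun v hv hv' => haniso v (hv' v hv)) π hπ
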